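/- (No-programming, pure programs) Let H_d and H_p be finite-dimensional complex Hilbert spaces, let G be a unitary operator on H_d ⊗ H_p, and let W, W' be unitary operators on H_d that are not phase-equivalent. Let P, Q ∈ H_p be unit vectors, and suppose that for every unit vector ψ ∈ H_d there exist unit vectors P_ψ, Q_ψ ∈ H_p such that G(ψ ⊗ P) = (Wψ) ⊗ P_ψ and G(ψ ⊗ Q) = (W'ψ) ⊗ Q_ψ. Then ⟨P, Q⟩ = 0. -/

import Mathlib

open Matrix
open scoped InnerProductSpace

noncomputable section

/-- The product vector `u ⊗ v` on `H_d ⊗ H_p`. -/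
def tensVec {d p : Type*} (u : d → ℂ) (v : p → ℂ) : (d × p) → ℂ :=
  fun q => u q.1 * v q.2

/-- Two unitaries are phase-equivalent if they differ by a global phase `e^{iθ}`. -/
def PhaseEquiv {n : Type*} (W W' : Matrix n n ℂ) : Prop :=
  ∃ θ : ℝ, W = Complex.exp (θ * Complex.I) • W'

/-!
Since `G` preserves inner products, comparing its values on `ψ ⊗ P` and `φ ⊗ Q` gives
`⟪ψ, φ⟫ ⟪P, Q⟫ = ⟪W ψ, W' φ⟫ ⟪P_ψ, Q_φ⟫`. If `⟪P, Q⟫ ≠ 0`, then `W ψ ⟂ W' φ` forces `ψ ⟂ φ`, so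
`T = W'⁻¹ W` satisfies `T x ⟂ y → x ⟂ y`. Hence every `x` lies in `(span {T x})ᗮᗮ = span {T x}`:
the operator `T` maps every vector to a collinear one and is thus a homothety, whose ratio has
modulus one because `T` is isometric. This makes `W` and `W'` phase-equivalent.
-/

section Homothety

variable {𝕜 E F : Type*} [RCLike 𝕜] [NormedAddCommGroup E] [InnerProductSpace 𝕜 E]
  [NormedAddCommGroup F] [InnerProductSpace 𝕜 F]

theorem mem_span_singleton_of_inner_eq_zero_imp {u x : E}
    (h : ∀ y, ⟪u, y⟫_𝕜 = 0 → ⟪x, y⟫_𝕜 = 0) : x ∈ Submodule.span 𝕜 {u} := by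
  rw [← (Submodule.span 𝕜 {u}).orthogonal_orthogonal, Submodule.mem_orthogonal']
  exact fun y hy ↦ h y (Submodule.mem_orthogonal_singleton_iff_inner_right.mp hy)

theorem exists_eq_smul_id_of_inner_map_eq_zero_imp (T : E →ₗ[𝕜] E)
    (h : ∀ x y, ⟪T x, y⟫_𝕜 = 0 → ⟪x, y⟫_𝕜 = 0) : ∃ a : 𝕜, T = a • 1 := by
  refine LinearMap.exists_eq_smul_id_of_forall_notLinearIndependent fun x hx ↦ ?_
  obtain ⟨a, ha⟩ := Submodule.mem_span_singleton.mp (mem_span_singleton_of_inner_eq_zero_imp (h x))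
  exact one_ne_zero (LinearIndependent.pair_iff.mp hx 1 (-a) (by simp [ha])).1

theorem exists_norm_eq_one_map_eq_smul (T : E →ₗᵢ[𝕜] E) {a : 𝕜} (h : ∀ x, T x = a • x) :
    ∃ b : 𝕜, ‖b‖ = 1 ∧ ∀ x, T x = b • x := by
  rcases subsingleton_or_nontrivial E with _ | _
  · exact ⟨1, norm_one, fun x ↦ Subsingleton.elim _ _⟩
  · obtain ⟨x, hx⟩ := exists_ne (0 : E)
    refine ⟨a, mul_right_cancel₀ (norm_ne_zero_iff.mpr hx) ?_, h⟩
    rw [← norm_smul, ← h, T.norm_map, one_mul]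

theorem exists_norm_eq_one_map_eq_smul_of_inner_eq_zero_imp (f : E →ₗᵢ[𝕜] F) (g : E ≃ₗᵢ[𝕜] F)
    (h : ∀ x y, ⟪f x, g y⟫_𝕜 = 0 → ⟪x, y⟫_𝕜 = 0) :
    ∃ α : 𝕜, ‖α‖ = 1 ∧ ∀ x, f x = α • g x := by
  let T : E →ₗᵢ[𝕜] E := g.symm.toLinearIsometry.comp f
  have gT (x : E) : g (T x) = f x := g.apply_symm_apply (f x)
  obtain ⟨a, ha⟩ := exists_eq_smul_id_of_inner_map_eq_zero_imp T.toLinearMap fun x y hxy ↦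
    h x y (by rw [← gT, g.inner_map_map]; exact hxy)
  obtain ⟨α, hα, hT⟩ := exists_norm_eq_one_map_eq_smul T (DFunLike.congr_fun ha)
  exact ⟨α, hα, fun x ↦ by rw [← gT, hT, map_smul]⟩

theorem inner_map_eq_zero_imp_of_forall_unit (f g : E →ₗ[𝕜] F)
    (h : ∀ x y, ‖x‖ = 1 → ‖y‖ = 1 → ⟪f x, g y⟫_𝕜 = 0 → ⟪x, y⟫_𝕜 = 0) (x y : E)
    (hxy : ⟪f x, g y⟫_𝕜 = 0) : ⟪x, y⟫_𝕜 = 0 := by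
  rcases eq_or_ne x 0 with rfl | hx
  · exact inner_zero_left y
  rcases eq_or_ne y 0 with rfl | hy
  · exact inner_zero_right x
  have := h _ _ (norm_smul_inv_norm (𝕜 := 𝕜) hx) (norm_smul_inv_norm (𝕜 := 𝕜) hy)
  simpa [inner_smul_left, inner_smul_right, hx, hy, hxy] using this

end Homothety

section Programming

variable {𝕜 E F H E' F' H' : Type*} [RCLike 𝕜]
  [NormedAddCommGroup E] [InnerProductSpace 𝕜 E] [NormedAddCommGroup E'] [InnerProductSpace 𝕜 E']
  [NormedAddCommGroup F] [InnerProductSpace 𝕜 F] [NormedAddCommGroup F'] [InnerProductSpace 𝕜 F']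
  [NormedAddCommGroup H] [InnerProductSpace 𝕜 H] [NormedAddCommGroup H'] [InnerProductSpace 𝕜 H']

variable (𝕜) in
/-- The map `t : E → F → H` behaves like `(u, v) ↦ u ⊗ v` into a tensor product of inner product
spaces. Only the inner products of product vectors are prescribed, so that the algebraic tensor
product, its Hilbert space completion and coordinate models are all covered. -/
def IsTensorMap (t : E → F → H) : Prop :=
  ∀ u u' v v', ⟪t u v, t u' v'⟫_𝕜 = ⟪u, u'⟫_𝕜 * ⟪v, v'⟫_𝕜

/-- The program `P` makes the processor `G` implement `W`: on every unit data vector `ψ`, it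
returns `W ψ` together with some residual program, which may depend on `ψ`. The maps `t` and `t'`
form the product vectors in the input and output spaces of `G`. -/
def Implements (t : E → F → H) (t' : E' → F' → H') (G : H → H') (P : F) (W : E → E') : Prop :=
  ∀ ψ, ‖ψ‖ = 1 → ∃ P', G (t ψ P) = t' (W ψ) P'

variable {t : E → F → H} {t' : E' → F' → H'}

theorem Implements.exists_inner_mul_inner_eq (ht : IsTensorMap 𝕜 t) (ht' : IsTensorMap 𝕜 t')
    {G : H →ₗᵢ[𝕜] H'} {W W' : E → E'} {P Q : F} (hP : Implements t t' G P W)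
    (hQ : Implements t t' G Q W') {ψ φ : E} (hψ : ‖ψ‖ = 1) (hφ : ‖φ‖ = 1) :
    ∃ P' Q' : F', ⟪ψ, φ⟫_𝕜 * ⟪P, Q⟫_𝕜 = ⟪W ψ, W' φ⟫_𝕜 * ⟪P', Q'⟫_𝕜 := by
  obtain ⟨P', hP'⟩ := hP ψ hψ
  obtain ⟨Q', hQ'⟩ := hQ φ hφ
  exact ⟨P', Q', by rw [← ht, ← G.inner_map_map, hP', hQ', ht']⟩

theorem stmt6_general (ht : IsTensorMap 𝕜 t) (ht' : IsTensorMap 𝕜 t') (G : H →ₗᵢ[𝕜] H')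
    (W : E →ₗᵢ[𝕜] E') (W' : E ≃ₗᵢ[𝕜] E') (hne : ¬ ∃ α : 𝕜, ‖α‖ = 1 ∧ ∀ ψ, W ψ = α • W' ψ)
    {P Q : F} (hP : Implements t t' G P W) (hQ : Implements t t' G Q W') : ⟪P, Q⟫_𝕜 = 0 := by
  by_contra hPQ
  refine hne (exists_norm_eq_one_map_eq_smul_of_inner_eq_zero_imp W W'
    (inner_map_eq_zero_imp_of_forall_unit W.toLinearMap W'.toLinearMap fun ψ φ hψ hφ h ↦ ?_))
  obtain ⟨P', Q', hinner⟩ := hP.exists_inner_mul_inner_eq ht ht' hQ hψ hφ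
  rw [show ⟪W ψ, W' φ⟫_𝕜 = 0 from h, zero_mul] at hinner
  exact (mul_eq_zero.mp hinner).resolve_right hPQ

end Programming

section Coordinates

variable {d p : Type*}

/-- The product vector `tensVec u v` as an element of Euclidean space, which carries the inner
product that the bare function type lacks. -/
def euclideanTensVec (u : EuclideanSpace ℂ d) (v : EuclideanSpace ℂ p) :
    EuclideanSpace ℂ (d × p) :=
  WithLp.toLp 2 (tensVec u v)

variable [Fintype d] [Fintype p]

theorem isTensorMap_euclideanTensVec :
    IsTensorMap ℂ (euclideanTensVec : EuclideanSpace ℂ d → EuclideanSpace ℂ p → _) := by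
  intro u u' v v'
  simp only [euclideanTensVec, PiLp.inner_apply, RCLike.inner_apply, tensVec, map_mul,
    Fintype.sum_prod_type, Finset.sum_mul_sum]
  exact Finset.sum_congr rfl fun i _ ↦ Finset.sum_congr rfl fun j _ ↦ mul_mul_mul_comm ..

variable [DecidableEq d] [DecidableEq p]

/-- The unitary operator on Euclidean space given by a unitary matrix. -/
def unitaryIsometryEquiv {𝕜 n : Type*} [RCLike 𝕜] [Fintype n] [DecidableEq n]
    (U : Matrix.unitaryGroup n 𝕜) : EuclideanSpace 𝕜 n ≃ₗᵢ[𝕜] EuclideanSpace 𝕜 n :=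
  Unitary.linearIsometryEquiv
    ⟨Matrix.toEuclideanCLM (n := n) (𝕜 := 𝕜) U,
      Unitary.map_mem (Matrix.toEuclideanCLM (n := n) (𝕜 := 𝕜)) U.2⟩

theorem implements_of_mulVec_tensVec {G : Matrix.unitaryGroup (d × p) ℂ}
    {W : Matrix.unitaryGroup d ℂ} {P : EuclideanSpace ℂ p}
    (h : ∀ ψ : EuclideanSpace ℂ d, ‖ψ‖ = 1 → ∃ P' : EuclideanSpace ℂ p,
      (G : Matrix _ _ ℂ) *ᵥ tensVec ψ P = tensVec ((W : Matrix d d ℂ) *ᵥ ψ) P') :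
    Implements euclideanTensVec euclideanTensVec (unitaryIsometryEquiv G) P
      (unitaryIsometryEquiv W) := fun ψ hψ ↦
  (h ψ hψ).imp fun _ hP' ↦ congrArg (WithLp.toLp 2) hP'

theorem phaseEquiv_of_unitaryIsometryEquiv_eq_smul {W W' : Matrix.unitaryGroup d ℂ} {α : ℂ}
    (hα : ‖α‖ = 1) (h : ∀ ψ, unitaryIsometryEquiv W ψ = α • unitaryIsometryEquiv W' ψ) :
    PhaseEquiv (W : Matrix d d ℂ) W' := by
  obtain ⟨θ, rfl⟩ := (Complex.norm_eq_one_iff α).mp hα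
  refine ⟨θ, Matrix.ext_iff_mulVec.mpr fun ψ ↦ ?_⟩
  rw [Matrix.smul_mulVec]
  exact congrArg WithLp.ofLp (h (WithLp.toLp 2 ψ))

end Coordinates

/-- No-programming, pure programs: let `G` be a unitary on `H_d ⊗ H_p` and
`W, W'` unitaries on `H_d` that are not phase-equivalent.  If `P, Q ∈ H_p` are unit vectors
such that for every unit `ψ ∈ H_d` there are unit vectors `P_ψ, Q_ψ ∈ H_p` with
`G(ψ ⊗ P) = (Wψ) ⊗ P_ψ` and `G(ψ ⊗ Q) = (W'ψ) ⊗ Q_ψ`, then `⟨P, Q⟩ = 0`. -/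
theorem stmt6 {d p : Type*} [Fintype d] [Fintype p] [DecidableEq d] [DecidableEq p]
    (G : Matrix (d × p) (d × p) ℂ) (hG : G ∈ Matrix.unitaryGroup (d × p) ℂ)
    (W W' : Matrix d d ℂ)
    (hW : W ∈ Matrix.unitaryGroup d ℂ) (hW' : W' ∈ Matrix.unitaryGroup d ℂ)
    (hne : ¬ PhaseEquiv W W')
    (P Q : EuclideanSpace ℂ p) (hP : ‖P‖ = 1) (hQ : ‖Q‖ = 1)
    (hprog : ∀ ψ : EuclideanSpace ℂ d, ‖ψ‖ = 1 →
      ∃ Pψ Qψ : EuclideanSpace ℂ p, ‖Pψ‖ = 1 ∧ ‖Qψ‖ = 1 ∧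
        G.mulVec (tensVec ψ P) = tensVec (W.mulVec ψ) Pψ ∧
        G.mulVec (tensVec ψ Q) = tensVec (W'.mulVec ψ) Qψ) :
    ⟪P, Q⟫_ℂ = 0 := by
  refine stmt6_general isTensorMap_euclideanTensVec isTensorMap_euclideanTensVec
    (unitaryIsometryEquiv ⟨G, hG⟩).toLinearIsometry (unitaryIsometryEquiv ⟨W, hW⟩).toLinearIsometry
    (unitaryIsometryEquiv ⟨W', hW'⟩)
    (fun ⟨_, hα, h⟩ ↦ hne (phaseEquiv_of_unitaryIsometryEquiv_eq_smul hα h))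
    (implements_of_mulVec_tensVec fun ψ hψ ↦ ?_) (implements_of_mulVec_tensVec fun ψ hψ ↦ ?_)
  · obtain ⟨Pψ, _, _, _, hGP, _⟩ := hprog ψ hψ
    exact ⟨Pψ, hGP⟩
  · obtain ⟨_, Qψ, _, _, _, hGQ⟩ := hprog ψ hψ
    exact ⟨Qψ, hGQ⟩

end
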